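/- For all reals k1, k2 with 1 ≤ k1 < k2 and every ε > 0, there exist a PB instance I with budget b, maximum project cost c_max(I) = b/k1 and minimum project cost c_min(I) = b/k2, together with a cost-neutral additive satisfaction function μ (which is not a DNS function), such that every feasible outcome of I satisfying EJR1_μ has utilitarian ratio at most ε with respect to μ. -/

import Mathlib

open Finset
open scoped Classical

noncomputable section

/-- A participatory budgeting (PB) instance. -/
structure PB (π ν : Type) where
  projs : Finset π
  voters : Finset ν
  approves : ν → Finset π
  cost : π → ℝ
  budget : ℝ
  projs_nonempty : projs.Nonempty
  budget_pos : 0 < budget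
  cost_pos : ∀ p ∈ projs, 0 < cost p
  cost_le_budget : ∀ p ∈ projs, cost p ≤ budget
  approves_subset : ∀ i ∈ voters, approves i ⊆ projs

/-- A satisfaction function assigns a positive value to each positive cost. -/
def IsSat (μ : ℝ → ℝ) : Prop := ∀ t : ℝ, 0 < t → 0 < μ t

/-- A DNS function: weakly increasing, with weakly decreasing satisfaction per unit cost. -/
def IsDNS (μ : ℝ → ℝ) : Prop :=
  IsSat μ ∧ (∀ s t : ℝ, 0 < s → s ≤ t → μ s ≤ μ t) ∧
    (∀ s t : ℝ, 0 < s → s ≤ t → μ t / t ≤ μ s / s)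

namespace PB

variable {π ν : Type}

/-- Supporters of a project. -/
def supp (I : PB π ν) (p : π) : Finset ν := I.voters.filter (fun i => p ∈ I.approves i)

/-- Total cost of a set of projects. -/
def costOf (I : PB π ν) (S : Finset π) : ℝ := ∑ p ∈ S, I.cost p

/-- A feasible outcome. -/
def feasibleSet (I : PB π ν) (S : Finset π) : Prop := S ⊆ I.projs ∧ I.costOf S ≤ I.budget

/-- Minimum project cost. -/
def cmin (I : PB π ν) : ℝ := I.projs.inf' I.projs_nonempty I.cost

/-- Maximum project cost. -/
def cmax (I : PB π ν) : ℝ := I.projs.sup' I.projs_nonempty I.cost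

/-- Utilitarian welfare of a set of projects. -/
def uw (I : PB π ν) (μ : ℝ → ℝ) (S : Finset π) : ℝ :=
  ∑ p ∈ S, ((I.supp p).card : ℝ) * μ (I.cost p)

/-- The value ("bang per buck") of a project. -/
def projVal (I : PB π ν) (μ : ℝ → ℝ) (p : π) : ℝ :=
  ((I.supp p).card : ℝ) * μ (I.cost p) / I.cost p

/-- Satisfaction of voter `i` from an outcome. -/
def satOf (I : PB π ν) (μ : ℝ → ℝ) (i : ν) (S : Finset π) : ℝ :=
  ∑ p ∈ S ∩ I.approves i, μ (I.cost p)

/-- Minimum satisfaction of a project in the instance. -/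
def muMin (I : PB π ν) (μ : ℝ → ℝ) : ℝ :=
  I.projs.inf' I.projs_nonempty (fun p => μ (I.cost p))

/-- Maximum satisfaction of a project in the instance. -/
def muMax (I : PB π ν) (μ : ℝ → ℝ) : ℝ :=
  I.projs.sup' I.projs_nonempty (fun p => μ (I.cost p))

/-- The maximal utilitarian welfare over feasible outcomes. -/
def maxUW (I : PB π ν) (μ : ℝ → ℝ) : ℝ :=
  (I.projs.powerset.filter (fun S => I.costOf S ≤ I.budget)).sup'
    ⟨∅, Finset.mem_filter.mpr ⟨Finset.empty_mem_powerset _,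
      by simpa [PB.costOf] using I.budget_pos.le⟩⟩
    (I.uw μ)

/-- A group `N'` is `T`-cohesive. -/
def cohesive (I : PB π ν) (N' : Finset ν) (T : Finset π) : Prop :=
  N' ⊆ I.voters ∧ T ⊆ I.projs ∧ (∀ i ∈ N', T ⊆ I.approves i) ∧
    I.costOf T ≤ ((N'.card : ℝ) / (I.voters.card : ℝ)) * I.budget

/-- Extended justified representation up to one project w.r.t. `μ`. -/
def EJR1 (I : PB π ν) (μ : ℝ → ℝ) (W : Finset π) : Prop :=
  ∀ N' T, I.cohesive N' T →
    T ⊆ W ∨ ∃ i ∈ N', ∃ p ∈ I.approves i, p ∉ W ∧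
      I.satOf μ i W + μ (I.cost p) > I.satOf μ i T

/-- Pick the element of maximal `f`-value, breaking ties by the linear order. -/
def pickMax [LinearOrder π] (f : π → ℝ) (S : Finset π) (h : S.Nonempty) : π :=
  (S.filter (fun p => ∀ q ∈ S, f q ≤ f p)).min' (by
    obtain ⟨p, hp, hm⟩ := S.exists_max_image f h
    exact ⟨p, Finset.mem_filter.mpr ⟨hp, hm⟩⟩)

/-- Pick the element of minimal `f`-value, breaking ties by the linear order. -/
def pickMin [LinearOrder π] (f : π → ℝ) (S : Finset π) (h : S.Nonempty) : π :=
  (S.filter (fun p => ∀ q ∈ S, f p ≤ f q)).min' (by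
    obtain ⟨p, hp, hm⟩ := S.exists_min_image f h
    exact ⟨p, Finset.mem_filter.mpr ⟨hp, hm⟩⟩)

section Greedy

variable [LinearOrder π]

/-- One choice of the greedy rule: among the unchosen affordable projects, the one of
maximum value (ties broken by the linear order); `none` if no project is affordable. -/
def greedyStep (I : PB π ν) (μ : ℝ → ℝ) (rem : Finset π) (budg : ℝ) : Option π :=
  if h : (rem.filter (fun p => I.cost p ≤ budg)).Nonempty then
    some (pickMax (I.projVal μ) (rem.filter (fun p => I.cost p ≤ budg)) h)
  else none

/-- The (ordered) list of projects chosen by the greedy rule, with fuel. -/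
def greedyAux (I : PB π ν) (μ : ℝ → ℝ) : ℕ → Finset π → ℝ → List π
  | 0, _, _ => []
  | (k+1), rem, budg =>
    match I.greedyStep μ rem budg with
    | none => []
    | some p => p :: greedyAux I μ k (rem.erase p) (budg - I.cost p)

/-- The projects chosen by `Greedy_μ`, in order of selection. -/
def greedySeq (I : PB π ν) (μ : ℝ → ℝ) : List π :=
  greedyAux I μ I.projs.card I.projs I.budget

/-- The outcome of the greedy rule started from a set `rem` of unchosen projects
with remaining budget `budg`. -/
def greedyFrom (I : PB π ν) (μ : ℝ → ℝ) (rem : Finset π) (budg : ℝ) : Finset π :=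
  (greedyAux I μ rem.card rem budg).toFinset

/-- The outcome of `Greedy_μ`. -/
def greedy (I : PB π ν) (μ : ℝ → ℝ) : Finset π := (I.greedySeq μ).toFinset

/-- The state (unchosen projects, remaining budget) of `Greedy_μ` after `k` stages. -/
def greedyStateAux (I : PB π ν) (μ : ℝ → ℝ) : ℕ → Finset π × ℝ
  | 0 => (I.projs, I.budget)
  | (k+1) =>
    match I.greedyStep μ (greedyStateAux I μ k).1 (greedyStateAux I μ k).2 with
    | none => greedyStateAux I μ k
    | some p => ((greedyStateAux I μ k).1.erase p, (greedyStateAux I μ k).2 - I.cost p)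

/-- The project chosen by `Greedy_μ` at stage `k+1` (i.e. after `k` stages), if any. -/
def greedyChoice (I : PB π ν) (μ : ℝ → ℝ) (k : ℕ) : Option π :=
  I.greedyStep μ (I.greedyStateAux μ k).1 (I.greedyStateAux μ k).2

end Greedy

section MES

variable [LinearOrder π]

/-- The set of values `ρ ≥ 0` at which project `p` can be bought given voter budgets `bud`. -/
def rhoSet (I : PB π ν) (μ : ℝ → ℝ) (bud : ν → ℝ) (p : π) : Set ℝ :=
  {ρ : ℝ | 0 ≤ ρ ∧ ∑ i ∈ I.supp p, min (bud i) (ρ * μ (I.cost p)) = I.cost p}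

/-- `ρ(p)`: the least `ρ ≥ 0` at which `p` can be bought (junk value if none exists). -/
def rho (I : PB π ν) (μ : ℝ → ℝ) (bud : ν → ℝ) (p : π) : ℝ := sInf (I.rhoSet μ bud p)

/-- One choice of MES: among the unchosen projects with `ρ(p) < ∞`, one minimizing `ρ(p)`
(ties broken by the linear order); `none` if no project can be bought. -/
def mesStep (I : PB π ν) (μ : ℝ → ℝ) (rem : Finset π) (bud : ν → ℝ) : Option π :=
  if h : (rem.filter (fun p => (I.rhoSet μ bud p).Nonempty)).Nonempty then
    some (pickMin (I.rho μ bud) (rem.filter (fun p => (I.rhoSet μ bud p).Nonempty)) h)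
  else none

/-- Voter budgets after the supporters of `p` pay for it. -/
def mesPay (I : PB π ν) (μ : ℝ → ℝ) (bud : ν → ℝ) (p : π) : ν → ℝ :=
  fun i => if i ∈ I.supp p then bud i - min (bud i) (I.rho μ bud p * μ (I.cost p)) else bud i

/-- The state (unchosen projects, voter budgets) of `MES_μ` after `k` stages. -/
def mesStateAux (I : PB π ν) (μ : ℝ → ℝ) : ℕ → Finset π × (ν → ℝ)
  | 0 => (I.projs, fun _ => I.budget / (I.voters.card : ℝ))
  | (k+1) =>
    match I.mesStep μ (mesStateAux I μ k).1 (mesStateAux I μ k).2 with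
    | none => mesStateAux I μ k
    | some p => ((mesStateAux I μ k).1.erase p, I.mesPay μ (mesStateAux I μ k).2 p)

/-- The project chosen by `MES_μ` at stage `k+1` (i.e. after `k` stages), if any. -/
def mesChoice (I : PB π ν) (μ : ℝ → ℝ) (k : ℕ) : Option π :=
  I.mesStep μ (I.mesStateAux μ k).1 (I.mesStateAux μ k).2

/-- The final state of `MES_μ`. -/
def mesFinal (I : PB π ν) (μ : ℝ → ℝ) : Finset π × (ν → ℝ) :=
  I.mesStateAux μ I.projs.card

/-- The outcome of `MES_μ`. -/
def mesOutcome (I : PB π ν) (μ : ℝ → ℝ) : Finset π := I.projs \ (I.mesFinal μ).1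

/-- The outcome of `MES_μ` completed by `Greedy_μ`: run MES, then greedy on the unchosen
projects with the remaining total budget. -/
def completedMES (I : PB π ν) (μ : ℝ → ℝ) : Finset π :=
  I.mesOutcome μ ∪
    I.greedyFrom μ (I.mesFinal μ).1 (I.budget - I.costOf (I.mesOutcome μ))

/-- Voter `i` is budget-limited for project `p` after `k` stages of `MES_μ`:
`p` is unchosen and approved by `i`, affordable from the total remaining budget,
but an equal split of its cost exceeds `i`'s personal budget. -/
def budgetLimitedAt (I : PB π ν) (μ : ℝ → ℝ) (k : ℕ) (i : ν) (p : π) : Prop :=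
  i ∈ I.voters ∧ p ∈ (I.mesStateAux μ k).1 ∧ p ∈ I.approves i ∧
    I.cost p ≤ ∑ j ∈ I.voters, (I.mesStateAux μ k).2 j ∧
    (I.mesStateAux μ k).2 i < I.cost p / ((I.supp p).card : ℝ)

end MES

/-- Total cost of a list of projects. -/
def listCost (I : PB π ν) (L : List π) : ℝ := (L.map I.cost).sum

/-- Total utilitarian welfare of a list of projects. -/
def listUW (I : PB π ν) (μ : ℝ → ℝ) (L : List π) : ℝ :=
  (L.map (fun p => ((I.supp p).card : ℝ) * μ (I.cost p))).sum

end PB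

/-!
One voter approves a single large project, and `n` voters approve the same `t` small projects,
where `t` is the largest number of small projects whose total cost stays strictly below the
budget. For large `n` the `n` voters deserve all `t` small projects, and as nobody in the group
approves anything else, EJR1 forces the outcome to contain them. What is left of the budget does
not pay for the large project, so the welfare is `t * n` times the satisfaction of a small project.
That number does not depend on the satisfaction of the large project, which can be made
arbitrarily high once satisfaction per unit of cost may increase with the cost.
-/

namespace PB

/-- A set of projects is exhaustive if no further project of the instance can be added to it
without exceeding the budget. The set itself is not required to be feasible. -/
def IsExhaustive (I : PB π ν) (S : Finset π) : Prop :=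
  ∀ p ∈ I.projs, p ∉ S → I.budget < I.costOf S + I.cost p

variable {I : PB π ν} {μ : ℝ → ℝ} {S T W : Finset π} {N : Finset ν}

theorem mem_supp {p : π} {i : ν} : i ∈ I.supp p ↔ i ∈ I.voters ∧ p ∈ I.approves i :=
  mem_filter

theorem feasibleSet.uw_le_maxUW (hS : I.feasibleSet S) : I.uw μ S ≤ I.maxUW μ :=
  le_sup' (I.uw μ) (mem_filter.mpr ⟨mem_powerset.mpr hS.1, hS.2⟩)

theorem feasibleSet_singleton {p : π} (hp : p ∈ I.projs) : I.feasibleSet {p} :=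
  ⟨singleton_subset_iff.mpr hp, (sum_singleton _ _).trans_le (I.cost_le_budget p hp)⟩

theorem costOf_le_costOf (hW : W ⊆ I.projs) (hSW : S ⊆ W) : I.costOf S ≤ I.costOf W :=
  sum_le_sum_of_subset_of_nonneg hSW fun p hp _ => (I.cost_pos p (hW hp)).le

theorem IsExhaustive.eq_of_subset_of_feasibleSet (hT : I.IsExhaustive T) (hTW : T ⊆ W)
    (hW : I.feasibleSet W) : W = T := by
  refine Subset.antisymm (fun p hpW => ?_) hTW
  by_contra hpT
  have hle : I.costOf T + I.cost p ≤ I.budget := calc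
    I.costOf T + I.cost p = I.costOf (insert p T) := by
      rw [costOf, costOf, sum_insert hpT, add_comm]
    _ ≤ I.costOf W := costOf_le_costOf hW.1 (insert_subset hpW hTW)
    _ ≤ I.budget := hW.2
  exact (hT p (hW.1 hpW) hpT).not_ge hle

-- Any project the group still lacks lies in `T`, so adding it to the outcome cannot push the
-- satisfaction of a member above that of `T`.
theorem EJR1.subset_of_cohesive (hE : I.EJR1 μ W) (hμ : IsSat μ) (hNT : I.cohesive N T)
    (happ : ∀ i ∈ N, I.approves i ⊆ T) : T ⊆ W := by
  rcases hE N T hNT with hTW | ⟨i, hi, p, hp, hpW, hgt⟩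
  · exact hTW
  · obtain ⟨-, hTP, hTA, -⟩ := hNT
    have hAi : I.approves i = T := (happ i hi).antisymm (hTA i hi)
    rw [hAi] at hp
    refine absurd hgt (not_lt.mpr ?_)
    calc I.satOf μ i W + μ (I.cost p)
        = ∑ q ∈ insert p (W ∩ T), μ (I.cost q) := by
          rw [sum_insert fun h => hpW (mem_inter.mp h).1, satOf, hAi, add_comm]
      _ ≤ ∑ q ∈ T, μ (I.cost q) :=
          sum_le_sum_of_subset_of_nonneg (insert_subset hp inter_subset_right)
            fun q hq _ => (hμ _ (I.cost_pos q (hTP hq))).le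
      _ = I.satOf μ i T := by rw [satOf, hAi, inter_self]

end PB

/-- The satisfaction function with value `1` at costs below `a` and value `M` from `a` onwards. -/
def stepSat (a M : ℝ) (x : ℝ) : ℝ := if x < a then 1 else M

section StepSat

variable {a c M : ℝ}

theorem stepSat_self : stepSat a M a = M := if_neg (lt_irrefl a)

theorem stepSat_of_lt (h : c < a) : stepSat a M c = 1 := if_pos h

theorem isSat_stepSat (hM : 0 < M) : IsSat (stepSat a M) := by
  intro x _
  rw [stepSat]
  split_ifs
  exacts [one_pos, hM]

-- Satisfaction per unit of cost increases from a cost just below the step to the step itself.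
theorem not_isDNS_stepSat (ha : 0 < a) (hM : 1 < M) : ¬ IsDNS (stepSat a M) := by
  rintro ⟨-, -, hdensity⟩
  have hM0 : 0 < M := one_pos.trans hM
  obtain ⟨s, hs, hsa⟩ := exists_between (div_lt_self ha hM)
  have hs0 : 0 < s := (div_pos ha hM0).trans hs
  have hle : M / a ≤ 1 / s := by
    simpa only [stepSat_self, stepSat_of_lt hsa] using hdensity s a hs0 hsa.le
  rw [div_le_div_iff₀ ha hs0] at hle
  rw [div_lt_iff₀ hM0] at hs
  linarith

end StepSat

/-- The instance with budget `1` in which voter `0` approves only project `0`, of cost `a`, and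
voters `1, …, n` approve exactly the projects `1, …, t`, each of cost `c`. -/
def twoBlocInstance (a c : ℝ) (ha : a ∈ Set.Ioc 0 1) (hc : c ∈ Set.Ioc 0 1) (t n : ℕ) :
    PB ℕ ℕ where
  projs := range (t + 1)
  voters := range (n + 1)
  approves i := if i = 0 then {0} else Icc 1 t
  cost p := if p = 0 then a else c
  budget := 1
  projs_nonempty := nonempty_range_add_one
  budget_pos := one_pos
  cost_pos p _ := by split_ifs; exacts [ha.1, hc.1]
  cost_le_budget p _ := by split_ifs; exacts [ha.2, hc.2]
  approves_subset i _ p hp := by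
    split_ifs at hp <;> simp only [mem_singleton, mem_Icc, mem_range] at hp ⊢ <;> omega

namespace twoBlocInstance

variable {a c : ℝ} {ha : a ∈ Set.Ioc 0 1} {hc : c ∈ Set.Ioc 0 1} {t n : ℕ} {μ : ℝ → ℝ}

local notation "J" => twoBlocInstance a c ha hc t n

theorem cost_zero : (J).cost 0 = a := rfl

theorem cost_of_ne_zero {p : ℕ} (hp : p ≠ 0) : (J).cost p = c := if_neg hp

theorem cost_of_mem_Icc {p : ℕ} (hp : p ∈ Icc 1 t) : (J).cost p = c :=
  cost_of_ne_zero (Nat.one_le_iff_ne_zero.mp (mem_Icc.mp hp).1)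

theorem approves_of_mem_Icc {i : ℕ} (hi : i ∈ Icc 1 n) : (J).approves i = Icc 1 t :=
  if_neg (Nat.one_le_iff_ne_zero.mp (mem_Icc.mp hi).1)

theorem zero_mem_projs : 0 ∈ (J).projs := mem_range.mpr t.succ_pos

theorem cmax_eq (hca : c ≤ a) : (J).cmax = a := by
  refine le_antisymm (sup'_le _ _ fun p _ => ?_) (le_sup' (J).cost zero_mem_projs)
  obtain rfl | hp := eq_or_ne p 0
  · exact cost_zero.le
  · exact (cost_of_ne_zero hp).trans_le hca

theorem cmin_eq (hca : c ≤ a) (ht : 0 < t) : (J).cmin = c := by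
  have h_one : 1 ∈ (J).projs := mem_range.mpr (Nat.succ_lt_succ ht)
  refine le_antisymm ((inf'_le _ h_one).trans_eq (cost_of_ne_zero one_ne_zero))
    (le_inf' _ _ fun p _ => ?_)
  obtain rfl | hp := eq_or_ne p 0
  · exact hca
  · exact (cost_of_ne_zero hp).ge

theorem costOf_Icc : (J).costOf (Icc 1 t) = t * c := by
  rw [PB.costOf, sum_congr rfl fun p hp => cost_of_mem_Icc hp]
  simp

theorem cohesive_Icc (h : t * c ≤ n / (n + 1)) : (J).cohesive (Icc 1 n) (Icc 1 t) := by
  refine ⟨fun i hi => ?_, fun p hp => ?_, fun i hi => (approves_of_mem_Icc hi).ge, ?_⟩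
  · exact mem_range_succ_iff.mpr (mem_Icc.mp hi).2
  · exact mem_range_succ_iff.mpr (mem_Icc.mp hp).2
  · rw [costOf_Icc]
    simpa [twoBlocInstance] using h

theorem isExhaustive_Icc (h : 1 < t * c + a) : (J).IsExhaustive (Icc 1 t) := by
  intro p hp hpt
  have hp0 : p = 0 := by
    have hpt_le : p ≤ t := mem_range_succ_iff.mp hp
    rw [mem_Icc] at hpt
    omega
  rwa [hp0, costOf_Icc, cost_zero]

theorem eq_Icc_of_EJR1 (hμ : IsSat μ) (hcoh : t * c ≤ n / (n + 1)) (hexh : 1 < t * c + a)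
    {W : Finset ℕ} (hW : (J).feasibleSet W) (hE : (J).EJR1 μ W) : W = Icc 1 t :=
  (isExhaustive_Icc hexh).eq_of_subset_of_feasibleSet
    (hE.subset_of_cohesive hμ (cohesive_Icc hcoh) fun _ hi => (approves_of_mem_Icc hi).le) hW

theorem supp_zero : (J).supp 0 = {0} := by
  ext i
  rw [PB.mem_supp]
  by_cases hi : i = 0 <;> simp [twoBlocInstance, hi]

theorem supp_of_mem_Icc {p : ℕ} (hp : p ∈ Icc 1 t) : (J).supp p = Icc 1 n := by
  ext i
  rw [PB.mem_supp]
  rw [mem_Icc] at hp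
  by_cases hi : i = 0 <;> simp [twoBlocInstance, hi] <;> omega

theorem uw_Icc : (J).uw μ (Icc 1 t) = t * (n * μ c) := by
  have hterm : ∀ p ∈ Icc 1 t, (((J).supp p).card : ℝ) * μ ((J).cost p) = n * μ c := by
    intro p hp
    rw [supp_of_mem_Icc hp, cost_of_mem_Icc hp, Nat.card_Icc, Nat.add_sub_cancel]
  rw [PB.uw, sum_congr rfl hterm]
  simp

theorem le_maxUW : μ a ≤ (J).maxUW μ := calc
  μ a = (J).uw μ {0} := by simp [PB.uw, supp_zero, cost_zero]
  _ ≤ (J).maxUW μ := (PB.feasibleSet_singleton zero_mem_projs).uw_le_maxUW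

theorem uw_le_mul_maxUW_of_EJR1 {ε : ℝ} (hε : 0 ≤ ε) (hμ : IsSat μ)
    (hcoh : t * c ≤ n / (n + 1)) (hexh : 1 < t * c + a) (hratio : t * (n * μ c) ≤ ε * μ a)
    {W : Finset ℕ} (hW : (J).feasibleSet W) (hE : (J).EJR1 μ W) :
    (J).uw μ W ≤ ε * (J).maxUW μ := by
  rw [eq_Icc_of_EJR1 hμ hcoh hexh hW hE, uw_Icc]
  exact hratio.trans (mul_le_mul_of_nonneg_left le_maxUW hε)

end twoBlocInstance

theorem exists_nat_mul_lt_one_and_one_le_mul_add {c : ℝ} (hc : 0 < c) :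
    ∃ t : ℕ, t * c < 1 ∧ 1 ≤ t * c + c := by
  obtain ⟨t, ht⟩ := Nat.exists_eq_add_one.mpr (Nat.ceil_pos.mpr (one_div_pos.mpr hc))
  obtain ⟨hlt, hle⟩ := (Nat.ceil_eq_iff t.add_one_ne_zero).mp ht
  rw [Nat.add_sub_cancel, lt_div_iff₀ hc] at hlt
  rw [Nat.cast_add_one, div_le_iff₀ hc, add_one_mul] at hle
  exact ⟨t, hlt, hle⟩

theorem exists_nat_lt_div_add_one {x : ℝ} (hx : x < 1) : ∃ n : ℕ, x < n / (n + 1) := by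
  obtain ⟨n, hn⟩ := exists_nat_one_div_lt (sub_pos.mpr hx)
  refine ⟨n, ?_⟩
  have hsplit : (n : ℝ) / (n + 1) = 1 - 1 / (n + 1) := by field_simp; ring
  linarith

/-- For all `1 ≤ k1 < k2` and `ε > 0`, there is an instance with
`c_max = b/k1`, `c_min = b/k2` and a (non-DNS) cost-neutral additive satisfaction function `μ`
such that every feasible EJR1 outcome has utilitarian ratio at most `ε`. -/
theorem non_dns_ratio_arbitrarily_bad (k1 k2 : ℝ) (hk1 : 1 ≤ k1) (hk12 : k1 < k2)
    (ε : ℝ) (hε : 0 < ε) :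
    ∃ I : PB ℕ ℕ, ∃ μ : ℝ → ℝ, IsSat μ ∧ ¬ IsDNS μ ∧
      I.cmax = I.budget / k1 ∧ I.cmin = I.budget / k2 ∧
      ∀ W : Finset ℕ, I.feasibleSet W → I.EJR1 μ W →
        I.uw μ W ≤ ε * I.maxUW μ := by
  have hk1_pos : 0 < k1 := one_pos.trans_le hk1
  have hk2_pos : 0 < k2 := hk1_pos.trans hk12
  have hca : 1 / k2 < 1 / k1 := one_div_lt_one_div_of_lt hk1_pos hk12
  have ha : 1 / k1 ∈ Set.Ioc 0 1 := ⟨one_div_pos.mpr hk1_pos, (div_le_one hk1_pos).mpr hk1⟩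
  have hc : 1 / k2 ∈ Set.Ioc 0 1 := ⟨one_div_pos.mpr hk2_pos, hca.le.trans ha.2⟩
  obtain ⟨t, hfit, hfull⟩ := exists_nat_mul_lt_one_and_one_le_mul_add hc.1
  have ht : 0 < t := by
    rw [Nat.pos_iff_ne_zero]
    rintro rfl
    rw [Nat.cast_zero, zero_mul, zero_add] at hfull
    exact (hfull.trans_lt hca).not_ge ha.2
  obtain ⟨n, hn⟩ := exists_nat_lt_div_add_one hfit
  obtain ⟨M, hM⟩ := exists_gt (max 1 (t * n / ε))
  obtain ⟨hM_one, hM_large⟩ := max_lt_iff.mp hM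
  have hsat : IsSat (stepSat (1 / k1) M) := isSat_stepSat (one_pos.trans hM_one)
  refine ⟨twoBlocInstance _ _ ha hc t n, stepSat (1 / k1) M, hsat, not_isDNS_stepSat ha.1 hM_one,
    twoBlocInstance.cmax_eq hca.le, twoBlocInstance.cmin_eq hca.le ht, fun W hW hE => ?_⟩
  refine twoBlocInstance.uw_le_mul_maxUW_of_EJR1 hε.le hsat hn.le (by linarith) ?_ hW hE
  rw [stepSat_of_lt hca, stepSat_self, mul_one]
  exact ((div_lt_iff₀' hε).mp hM_large).le
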